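/- Let G ⊆ UT(n,ℝ) be a real unipotent group and let H, N be real algebraic subgroups of G with N normal in G. Assume α ∈ H^♯ and there is b ∈ G such that the coset bN is near α. Then bN ∩ H ≠ ∅, the set bN ∩ H is a coset of N ∩ H, and the coset bN ∩ H is near α as well. -/

import Mathlib

open Pointwise Filter

noncomputable section

/-- Square matrices of size `n` over `R`. -/
abbrev Mat (n : ℕ) (R : Type) : Type := Matrix (Fin n) (Fin n) R

/-- The set `UT(n,ℝ)` of upper triangular matrices with `1`s on the diagonal. -/
def UTset (n : ℕ) : Set (Mat n ℝ) :=
  {A | (∀ i, A i i = 1) ∧ ∀ i j : Fin n, (j : ℕ) < (i : ℕ) → A i j = 0}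

/-- The entries of a matrix, as a point of `ℝ^(n²)`. -/
def matEval {n : ℕ} (A : Mat n ℝ) : Fin n × Fin n → ℝ := fun ij => A ij.1 ij.2

/-- A real unipotent group: a subgroup of `UT(n,ℝ)` which is the common zero set in
`UT(n,ℝ)` of a family of real polynomials in the matrix entries. -/
def IsRealUnipotentGroup (n : ℕ) (G : Set (Mat n ℝ)) : Prop :=
  (∃ S : Set (MvPolynomial (Fin n × Fin n) ℝ),
      G = {A | A ∈ UTset n ∧ ∀ p ∈ S, MvPolynomial.eval (matEval A) p = 0}) ∧
    (1 : Mat n ℝ) ∈ G ∧ (∀ a ∈ G, ∀ b ∈ G, a * b ∈ G) ∧ ∀ a ∈ G, a⁻¹ ∈ G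

/-- A real algebraic subgroup of a real unipotent group `G`. -/
def IsRealAlgSubgroup (n : ℕ) (G H : Set (Mat n ℝ)) : Prop :=
  H ⊆ G ∧ IsRealUnipotentGroup n H

/-- `N` is a normal subgroup-set of `G`. -/
def IsNormalIn (n : ℕ) (G N : Set (Mat n ℝ)) : Prop :=
  ∀ g ∈ G, ∀ x ∈ N, g * x * g⁻¹ ∈ N

/-- `Γ` is a lattice in `G`: a discrete subgroup which is cocompact, i.e. there is a
compact `K ⊆ G` with `K·Γ = G` (equivalently, `G/Γ` is compact). -/
def IsLatticeIn (n : ℕ) (G Γ : Set (Mat n ℝ)) : Prop :=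
  Γ ⊆ G ∧ (1 : Mat n ℝ) ∈ Γ ∧ (∀ a ∈ Γ, ∀ b ∈ Γ, a * b ∈ Γ) ∧ (∀ a ∈ Γ, a⁻¹ ∈ Γ) ∧
    DiscreteTopology ↥Γ ∧
    ∃ K : Set (Mat n ℝ), K ⊆ G ∧ IsCompact K ∧ ∀ g ∈ G, ∃ k ∈ K, ∃ γ ∈ Γ, g = k * γ

/-- `H` is `Γ`-rational: `Γ ∩ H` is a lattice in `H`. -/
def IsRationalFor (n : ℕ) (Γ H : Set (Mat n ℝ)) : Prop :=
  IsLatticeIn n H (Γ ∩ H)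

/-- The hyperreal matrix represented by a sequence of real matrices. -/
def matOfSeq (n : ℕ) (u : ℕ → Mat n ℝ) : Mat n Hyperreal :=
  Matrix.of fun i j => Hyperreal.ofSeq fun k => u k i j

/-- The nonstandard extension `S^♯` of a set `S` of real matrices: hyperreal matrices
represented by sequences landing in `S` on a set of indices in the ultrafilter. -/
def matSharp (n : ℕ) (S : Set (Mat n ℝ)) : Set (Mat n Hyperreal) :=
  {A | ∃ u : ℕ → Mat n ℝ, (∀ᶠ k in hyperfilter ℕ, u k ∈ S) ∧ A = matOfSeq n u}

/-- The canonical embedding of real matrices into hyperreal matrices. -/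
def matCast {n : ℕ} (A : Mat n ℝ) : Mat n Hyperreal :=
  Matrix.of fun i j => (A i j : Hyperreal)

/-- `μ(G)`: elements of `G^♯` all of whose entries are infinitesimally close to the
corresponding entries of the identity matrix. -/
def muSet (n : ℕ) (G : Set (Mat n ℝ)) : Set (Mat n Hyperreal) :=
  {A | A ∈ matSharp n G ∧ ∀ i j, Hyperreal.Infinitesimal (A i j - (1 : Mat n Hyperreal) i j)}

/-- The coset `gH` is near `α`, i.e. `α ∈ μ(G)·g·H^♯`. -/
def NearCoset (n : ℕ) (G : Set (Mat n ℝ)) (g : Mat n ℝ) (H : Set (Mat n ℝ))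
    (α : Mat n Hyperreal) : Prop :=
  α ∈ muSet n G * ({matCast g} * matSharp n H)

/-- The set of standard parts of the finite elements of a set of hyperreal matrices. -/
def matStSet (n : ℕ) (A : Set (Mat n Hyperreal)) : Set (Mat n ℝ) :=
  {B | ∃ a ∈ A, ∀ i j, Hyperreal.IsSt (a i j) (B i j)}

/-- A polynomial map `ℝ^d → Mat n ℝ`. -/
def IsPolyMapVec (d n : ℕ) (F : (Fin d → ℝ) → Mat n ℝ) : Prop :=
  ∃ P : Fin n → Fin n → MvPolynomial (Fin d) ℝ,
    ∀ x i j, F x i j = MvPolynomial.eval x (P i j)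

/-- The inclusion `ℝ →+* ℝ*` as a ring homomorphism. -/
def realHyperRingHom : ℝ →+* Hyperreal where
  toFun r := (r : Hyperreal)
  map_one' := Hyperreal.coe_one
  map_mul' := Hyperreal.coe_mul
  map_zero' := Hyperreal.coe_zero
  map_add' := Hyperreal.coe_add

/-- A semialgebraic subset of matrix space: a finite union of sets defined by finitely
many polynomial equations and finitely many strict polynomial inequalities. -/
def IsSemialgebraic (n : ℕ) (S : Set (Mat n ℝ)) : Prop :=
  ∃ (k : ℕ) (P Q : Fin k → Finset (MvPolynomial (Fin n × Fin n) ℝ)),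
    S = ⋃ t : Fin k, {A | (∀ p ∈ P t, MvPolynomial.eval (matEval A) p = 0) ∧
      ∀ q ∈ Q t, 0 < MvPolynomial.eval (matEval A) q}

/-!
Represent `α` by a sequence `hₖ ∈ H`; nearness means `hₖ = eₖ * b * vₖ` with `eₖ → 1` and `vₖ ∈ N`.
Then `eₖ * b ∈ H * N`, a closed set, so `b ∈ H * N`, which says that `b * N` meets `H`. If `c` lies
in the intersection, then `eₖ ∈ H * N`. Let `σ : H * N → H` be continuous with `σ 1 = 1` and
`g ∈ σ g * N`. Since `H` normalises `N`, `hₖ ∈ σ eₖ * c * (N ∩ H)`, and `σ eₖ → 1` in `H`.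

Closedness of `H * N` and the section `σ` both come from canonical coordinates of the second kind.
Real powers `x ^ t` of a unipotent matrix are polynomial in `t`, so an algebraic subgroup, and also
`H * N`, is closed under them. A subgroup `K` of `UT(n,ℝ)` with this property has elements `xᵢ` and
continuous functions `Tᵢ` on the whole matrix space such that `g = ∏ xᵢ ^ Tᵢ(g)` for all `g ∈ K`;
hence `K` is closed. For `K = H * N` write `xᵢ = hᵢ * vᵢ` and take `σ g = ∏ hᵢ ^ Tᵢ(g)`.
-/

open Polynomial Topology

theorem eq_of_eval_natCast_eq {R : Type*} [CommRing R] [IsDomain R] [CharZero R] {p q : R[X]}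
    (h : ∀ k : ℕ, p.eval (k : R) = q.eval (k : R)) : p = q :=
  eq_of_infinite_eval_eq p q <|
    (Set.infinite_range_of_injective Nat.cast_injective).mono (Set.range_subset_iff.2 h)

/-- A curve of matrices whose entries are polynomials in the parameter. -/
def IsPolynomialCurve {n : ℕ} (f : ℝ → Mat n ℝ) : Prop :=
  ∃ F : Matrix (Fin n) (Fin n) ℝ[X], ∀ t, f t = (aeval t).mapMatrix F

namespace IsPolynomialCurve

variable {n : ℕ} {f g : ℝ → Mat n ℝ}

theorem const (A : Mat n ℝ) : IsPolynomialCurve fun _ => A :=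
  ⟨A.map C, fun t => by ext; simp⟩

theorem mul (hf : IsPolynomialCurve f) (hg : IsPolynomialCurve g) :
    IsPolynomialCurve fun t => f t * g t := by
  obtain ⟨F, hF⟩ := hf
  obtain ⟨E, hE⟩ := hg
  exact ⟨F * E, fun t => by simp only [hF, hE, map_mul]⟩

theorem adjugate (hf : IsPolynomialCurve f) : IsPolynomialCurve fun t => (f t).adjugate := by
  obtain ⟨F, hF⟩ := hf
  exact ⟨F.adjugate, fun t => by simp only [hF, AlgHom.map_adjugate]⟩

theorem comp_add_const (hf : IsPolynomialCurve f) (c : ℝ) :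
    IsPolynomialCurve fun t => f (t + c) := by
  obtain ⟨F, hF⟩ := hf
  exact ⟨F.map (taylor c), fun t => by ext; simp [hF, taylor_eval]⟩

theorem exists_eval_eq (hf : IsPolynomialCurve f) (i j : Fin n) :
    ∃ p : ℝ[X], ∀ t, f t i j = p.eval t := by
  obtain ⟨F, hF⟩ := hf
  exact ⟨F i j, fun t => by simp [hF, coe_aeval_eq_eval]⟩

theorem continuous (hf : IsPolynomialCurve f) : Continuous f :=
  continuous_matrix fun i j => by
    obtain ⟨p, hp⟩ := hf.exists_eval_eq i j
    simpa only [hp] using p.continuous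

theorem apply_eq_eval (hf : IsPolynomialCurve f) {i j : Fin n} {q : ℝ[X]}
    (h : ∀ k : ℕ, f k i j = q.eval (k : ℝ)) (t : ℝ) : f t i j = q.eval t := by
  obtain ⟨p, hp⟩ := hf.exists_eval_eq i j
  rw [hp, eq_of_eval_natCast_eq fun k => (hp k).symm.trans (h k)]

theorem eq_of_natCast_eq (hf : IsPolynomialCurve f) (hg : IsPolynomialCurve g)
    (h : ∀ k : ℕ, f k = g k) (t : ℝ) : f t = g t := by
  ext i j
  obtain ⟨q, hq⟩ := hg.exists_eval_eq i j
  rw [hq, hf.apply_eq_eval (fun k => by rw [h, hq])]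

theorem mem_UTset (hf : IsPolynomialCurve f) (h : ∀ k : ℕ, f k ∈ UTset n) (t : ℝ) :
    f t ∈ UTset n := by
  refine ⟨fun i => ?_, fun i j hij => ?_⟩
  · simpa using hf.apply_eq_eval (q := 1) (fun k => by simpa using (h k).1 i) t
  · simpa using hf.apply_eq_eval (q := 0) (fun k => by simpa using (h k).2 i j hij) t

theorem exists_eval_matEval_eq (hf : IsPolynomialCurve f) (p : MvPolynomial (Fin n × Fin n) ℝ) :
    ∃ q : ℝ[X], ∀ t, MvPolynomial.eval (matEval (f t)) p = q.eval t := by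
  obtain ⟨F, hF⟩ := hf
  refine ⟨MvPolynomial.aeval (fun ij => F ij.1 ij.2) p, fun t => ?_⟩
  rw [← coe_aeval_eq_eval, MvPolynomial.comp_aeval_apply, hF]
  rfl

theorem mem_of_natCast_mem (hf : IsPolynomialCurve f) {H : Set (Mat n ℝ)}
    (hH : IsRealUnipotentGroup n H) (h : ∀ k : ℕ, f k ∈ H) (t : ℝ) : f t ∈ H := by
  obtain ⟨⟨S, rfl⟩, -⟩ := hH
  refine ⟨hf.mem_UTset (fun k => (h k).1) t, fun p hp => ?_⟩
  obtain ⟨q, hq⟩ := hf.exists_eval_matEval_eq p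
  have hq0 : q = 0 := eq_of_eval_natCast_eq fun k => by rw [← hq, (h k).2 p hp, eval_zero]
  rw [hq, hq0, eval_zero]

end IsPolynomialCurve

section RealPowers

variable {n : ℕ} {A : Mat n ℝ}

/-- Real powers of a unipotent matrix, given by the binomial series `∑ⱼ (t choose j) (A - 1)ʲ`,
which terminates because `A - 1` is nilpotent. -/
def matRPow (A : Mat n ℝ) (t : ℝ) : Mat n ℝ :=
  ∑ j ∈ Finset.range n, Ring.choose t j • (A - 1) ^ j

theorem isPolynomialCurve_matRPow (A : Mat n ℝ) : IsPolynomialCurve (matRPow A) := by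
  refine ⟨∑ j ∈ Finset.range n, Ring.choose (X : ℝ[X]) j • ((A - 1) ^ j).map C, fun t => ?_⟩
  have hchoose (j : ℕ) : (Ring.choose X j : ℝ[X]).eval t = Ring.choose t j := by
    simpa using Ring.map_choose (evalRingHom t) X j
  ext i l
  simp [matRPow, Matrix.sum_apply, coe_aeval_eq_eval, hchoose]

theorem det_of_mem_UTset (hA : A ∈ UTset n) : A.det = 1 := by
  rw [Matrix.det_of_isUpperTriangular fun i j hij => hA.2 i j hij]
  simp [hA.1]

theorem sub_one_pow_of_mem_UTset (hA : A ∈ UTset n) : (A - 1) ^ n = 0 := by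
  simpa [Matrix.charpoly_of_isUpperTriangular A fun i j hij => hA.2 i j hij, hA.1]
    using A.aeval_self_charpoly

theorem matRPow_natCast (hA : A ∈ UTset n) (k : ℕ) : matRPow A k = A ^ k := by
  have hvanish : ∀ j ≥ n, k.choose j • (A - 1) ^ j = 0 := fun j hj => by
    rw [pow_eq_zero_of_le hj (sub_one_pow_of_mem_UTset hA), smul_zero]
  have hvanish' : ∀ j ≥ k + 1, k.choose j • (A - 1) ^ j = 0 := fun j hj => by
    rw [Nat.choose_eq_zero_of_lt hj, zero_smul]
  calc matRPow A k = ∑ j ∈ Finset.range n, k.choose j • (A - 1) ^ j := by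
        simp only [matRPow, Ring.choose_natCast, Nat.cast_smul_eq_nsmul]
    _ = ∑ j ∈ Finset.range (k + 1), k.choose j • (A - 1) ^ j := by
        rw [← Finset.eventually_constant_sum hvanish (le_max_left n (k + 1)),
          Finset.eventually_constant_sum hvanish' (le_max_right n (k + 1))]
    _ = (A - 1 + 1) ^ k := by
        simp only [(Commute.one_right (A - 1)).add_pow, one_pow, mul_one, nsmul_eq_mul']
    _ = A ^ k := by rw [sub_add_cancel]

end RealPowers

section Unitriangular

/-- The group `UT(n,ℝ)`; its inverse is the matrix inverse. -/
def unitriangular (n : ℕ) : Submonoid (Mat n ℝ) where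
  carrier := UTset n
  one_mem' := ⟨Matrix.one_apply_eq, fun _ _ hij => Matrix.one_apply_ne fun h => by simp [h] at hij⟩
  mul_mem' {A B} hA hB := by
    refine ⟨fun i => ?_, fun i j hij => ?_⟩
    · rw [Matrix.mul_apply, Finset.sum_eq_single i, hA.1, hB.1, one_mul]
      · intro k _ hki
        rcases hki.lt_or_gt with hki | hki
        · rw [hA.2 i k hki, zero_mul]
        · rw [hB.2 k i hki, mul_zero]
      · simp
    · exact Matrix.BlockTriangular.mul (b := id) (fun i j h => hA.2 i j h)
        (fun i j h => hB.2 i j h) hij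

variable {n : ℕ}

theorem matRPow_mem_unitriangular {A : Mat n ℝ} (hA : A ∈ unitriangular n) (t : ℝ) :
    matRPow A t ∈ unitriangular n :=
  (isPolynomialCurve_matRPow A).mem_UTset
    (fun k => by rw [matRPow_natCast hA]; exact pow_mem hA k) t

theorem matRPow_add_one {A : Mat n ℝ} (hA : A ∈ unitriangular n) (t : ℝ) :
    matRPow A (t + 1) = matRPow A t * A := by
  refine ((isPolynomialCurve_matRPow A).comp_add_const 1).eq_of_natCast_eq
    ((isPolynomialCurve_matRPow A).mul (.const A)) (fun k => ?_) t
  rw [← Nat.cast_succ, matRPow_natCast hA, matRPow_natCast hA, pow_succ]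

theorem matRPow_neg_one_mul {A : Mat n ℝ} (hA : A ∈ unitriangular n) :
    matRPow A (-1) * A = 1 := by
  rw [← matRPow_add_one hA, neg_add_cancel]
  simpa using matRPow_natCast hA 0

instance : Group (unitriangular n) where
  inv A := ⟨(A : Mat n ℝ)⁻¹, by
    rw [Matrix.inv_eq_left_inv (matRPow_neg_one_mul A.2)]
    exact matRPow_mem_unitriangular A.2 _⟩
  inv_mul_cancel A := Subtype.ext <| Matrix.nonsing_inv_mul _ <| by
    rw [det_of_mem_UTset A.2]; exact isUnit_one

theorem unitriangular.coe_inv (A : unitriangular n) :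
    ((A⁻¹ : unitriangular n) : Mat n ℝ) = (A : Mat n ℝ)⁻¹ := rfl

theorem unitriangular.coe_inv_eq_adjugate (A : unitriangular n) :
    ((A⁻¹ : unitriangular n) : Mat n ℝ) = (A : Mat n ℝ).adjugate := by
  rw [coe_inv, Matrix.inv_def, det_of_mem_UTset A.2, Ring.inverse_one, one_smul]

instance : IsTopologicalGroup (unitriangular n) where
  continuous_inv := by
    refine continuous_induced_rng.2 ?_
    simpa only [Function.comp_def, unitriangular.coe_inv_eq_adjugate]
      using continuous_subtype_val.matrix_adjugate

end Unitriangular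

namespace unitriangular

variable {n : ℕ}

/-- Real powers in `UT(n,ℝ)`: the one-parameter subgroup through `x`. -/
def rpow (x : unitriangular n) (t : ℝ) : unitriangular n :=
  ⟨matRPow x t, matRPow_mem_unitriangular x.2 t⟩

theorem rpow_natCast (x : unitriangular n) (k : ℕ) : rpow x k = x ^ k :=
  Subtype.ext <| matRPow_natCast x.2 k

theorem rpow_zero (x : unitriangular n) : rpow x 0 = 1 := by
  simpa using rpow_natCast x 0

theorem continuous_rpow (x : unitriangular n) : Continuous (rpow x) :=
  (isPolynomialCurve_matRPow (x : Mat n ℝ)).continuous.subtype_mk _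

/-- The entries of `A - 1` on and above the diagonal. The position `(i, j)` is encoded as the
interval `[i, j]`, since the entry of `AB - 1` there is the sum of those of `A - 1` and `B - 1` plus
terms that only involve strictly smaller intervals. -/
def coord (I : NonemptyInterval (Fin n)) (A : Mat n ℝ) : ℝ :=
  (A - 1) I.fst I.snd

variable {I : NonemptyInterval (Fin n)}

theorem continuous_coord (I : NonemptyInterval (Fin n)) : Continuous (coord I) :=
  (continuous_id.sub continuous_const).matrix_elem _ _

theorem coord_one : coord I 1 = 0 := by
  simp [coord]

theorem ext_coord {x y : unitriangular n}
    (h : ∀ I : NonemptyInterval (Fin n), coord I x = coord I y) : x = y := by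
  refine Subtype.ext (Matrix.ext fun i j => ?_)
  rcases le_or_gt i j with hij | hji
  · simpa [coord] using h ⟨(i, j), hij⟩
  · rw [x.2.2 i j hji, y.2.2 i j hji]

theorem coord_mul {x : unitriangular n} (hx : ∀ J < I, coord J x = 0) (y : unitriangular n) :
    coord I (x * y : unitriangular n) = coord I x + coord I y := by
  have hexpand : (x * y : Mat n ℝ) - 1 = (x - 1) * (y - 1) + ((x - 1) + (y - 1)) := by
    noncomm_ring
  have hcross : ((x - 1 : Mat n ℝ) * (y - 1)) I.fst I.snd = 0 := by
    rw [Matrix.mul_apply]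
    refine Finset.sum_eq_zero fun k _ => ?_
    rcases lt_or_ge k I.snd with hk | hk
    · refine mul_eq_zero_of_left ?_ _
      rcases le_or_gt I.fst k with hk' | hk'
      · exact hx ⟨(I.fst, k), hk'⟩ <|
          lt_of_le_not_ge ⟨le_rfl, hk.le⟩ fun h => hk.not_ge h.2
      · simp [x.2.2 I.fst k hk', hk'.ne']
    · refine mul_eq_zero_of_right _ ?_
      rcases hk.eq_or_lt with rfl | hk
      · simp [y.2.1]
      · simp [y.2.2 k I.snd hk, hk.ne']
  rw [coord, Submonoid.coe_mul, hexpand, Matrix.add_apply, hcross, zero_add]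
  rfl

theorem coord_pow {x : unitriangular n} (hx : ∀ J < I, coord J x = 0) (k : ℕ) :
    coord I (x ^ k : unitriangular n) = k * coord I x := by
  induction k with
  | zero => simp [coord_one]
  | succ k ih => rw [pow_succ', coord_mul hx, ih]; push_cast; ring

theorem coord_rpow {x : unitriangular n} (hx : ∀ J < I, coord J x = 0) (t : ℝ) :
    coord I (rpow x t) = t * coord I x := by
  let q : ℝ[X] := X * C (coord I x) + C ((1 : Mat n ℝ) I.fst I.snd)
  have hnat (k : ℕ) : matRPow x k I.fst I.snd = q.eval (k : ℝ) := by
    have hk := coord_pow hx k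
    rw [coord, Matrix.sub_apply, sub_eq_iff_eq_add, SubmonoidClass.coe_pow] at hk
    simp only [q, matRPow_natCast x.2, hk, eval_add, eval_mul, eval_X, eval_C]
  have hreal := (isPolynomialCurve_matRPow (x : Mat n ℝ)).apply_eq_eval hnat t
  simp [coord, rpow, hreal, q]

theorem coord_rpow_inv_mul {x : unitriangular n} (hx : ∀ J < I, coord J x = 0) (t : ℝ)
    (y : unitriangular n) :
    coord I ((rpow x t)⁻¹ * y : unitriangular n) = coord I y - t * coord I x := by
  have hrpow : ∀ J < I, coord J (rpow x t) = 0 := fun J hJ => by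
    rw [coord_rpow fun J' hJ' => hx J' (hJ'.trans hJ), hx J hJ, mul_zero]
  have := coord_mul hrpow ((rpow x t)⁻¹ * y)
  rw [mul_inv_cancel_left, coord_rpow hx] at this
  linarith

/-- The map `A ↦ x₁ ^ T₁(A) * ⋯ * xₘ ^ Tₘ(A)` given by the list of pairs `(xᵢ, Tᵢ)`. When it
restricts to the identity of a subgroup, the `Tᵢ` are canonical coordinates of the second kind. -/
def prodRPow (L : List (unitriangular n × C(Mat n ℝ, ℝ))) (A : Mat n ℝ) : unitriangular n :=
  (L.map fun p => rpow p.1 (p.2 A)).prod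

theorem continuous_prodRPow (L : List (unitriangular n × C(Mat n ℝ, ℝ))) :
    Continuous (prodRPow L) :=
  continuous_list_prod L fun p _ => (continuous_rpow p.1).comp p.2.continuous

theorem prodRPow_one {L : List (unitriangular n × C(Mat n ℝ, ℝ))} (hL : ∀ p ∈ L, p.2 1 = 0) :
    prodRPow L 1 = 1 :=
  List.prod_eq_one <| by
    rintro _ hx
    obtain ⟨p, hp, rfl⟩ := List.mem_map.1 hx
    rw [hL p hp, rpow_zero]

theorem exists_rpow_inv_mul_coord_eq_zero (K : Subgroup (unitriangular n))
    {R : Set (NonemptyInterval (Fin n))} (hR : IsUpperSet R) (hI : Minimal (· ∈ R) I) :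
    ∃ x ∈ K, ∃ T : C(Mat n ℝ, ℝ), T 1 = 0 ∧ ∀ g ∈ K, (∀ J ∉ R, coord J g = 0) →
      ∀ J ∉ R \ {I}, coord J ((rpow x (T g))⁻¹ * g : unitriangular n) = 0 := by
  by_cases htriv : ∀ g ∈ K, (∀ J ∉ R, coord J g = 0) → coord I g = 0
  · refine ⟨1, K.one_mem, 0, rfl, fun g hg hgR J hJ => ?_⟩
    rw [coord_rpow_inv_mul fun _ _ => coord_one, Submonoid.coe_one, coord_one, mul_zero, sub_zero]
    by_cases hJR : J ∈ R
    · obtain rfl : J = I := by_contra fun h => hJ ⟨hJR, h⟩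
      exact htriv g hg hgR
    · exact hgR J hJR
  push Not at htriv
  obtain ⟨x, hx, hxR, hxI⟩ := htriv
  refine ⟨x, hx, ⟨fun A => coord I A / coord I x, (continuous_coord I).div_const _⟩,
    by simp [coord_one], fun g _ hgR J hJ => ?_⟩
  by_cases hJR : J ∈ R
  · obtain rfl : J = I := by_contra fun h => hJ ⟨hJR, h⟩
    rw [coord_rpow_inv_mul fun J' hJ' => hxR J' (hI.not_prop_of_lt hJ')]
    simp [div_mul_cancel₀ _ hxI]
  · rw [coord_rpow_inv_mul fun J' hJ' => hxR J' (mt (hR hJ'.le) hJR), hgR J hJR, hxR J hJR,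
      mul_zero, sub_zero]

variable {K : Subgroup (unitriangular n)}

theorem exists_prodRPow_eq_of_isUpperSet (hK : ∀ x ∈ K, ∀ t, rpow x t ∈ K)
    (R : Set (NonemptyInterval (Fin n))) (hR : IsUpperSet R) :
    ∃ L : List (unitriangular n × C(Mat n ℝ, ℝ)), (∀ p ∈ L, p.1 ∈ K ∧ p.2 1 = 0) ∧
      ∀ g ∈ K, (∀ I ∉ R, coord I g = 0) → prodRPow L g = g := by
  induction R using WellFoundedLT.induction with
  | ind R ih =>
  rcases R.eq_empty_or_nonempty with rfl | hne
  · refine ⟨[], by simp, fun g _ hg => ?_⟩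
    exact ext_coord fun I => by simp [prodRPow, coord_one, hg I]
  obtain ⟨I, hI⟩ := R.toFinite.exists_minimal hne
  obtain ⟨x, hx, T, hT, hxT⟩ := exists_rpow_inv_mul_coord_eq_zero K hR hI
  obtain ⟨L, hL, hLprod⟩ := ih (R \ {I}) (Set.sdiff_singleton_ssubset.2 hI.prop)
    (hR.erase fun J hJ hJI => hI.eq_of_le hJ hJI)
  let r : C(Mat n ℝ, Mat n ℝ) := ⟨fun A => ((rpow x (T A))⁻¹ : unitriangular n) * A,
    (continuous_subtype_val.comp ((continuous_rpow x).comp T.continuous).inv).mul continuous_id⟩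
  have hr_one : r 1 = 1 := by simp [r, hT, rpow_zero]
  have hr (g : unitriangular n) : r g = ((rpow x (T g))⁻¹ * g : unitriangular n) := rfl
  refine ⟨(x, T) :: L.map fun p => (p.1, p.2.comp r), ?_, fun g hg hgR => ?_⟩
  · simp only [List.forall_mem_cons, List.forall_mem_map, ContinuousMap.comp_apply, hr_one]
    exact ⟨⟨hx, hT⟩, hL⟩
  · have hrg : prodRPow L (r g) = (rpow x (T g))⁻¹ * g := by
      rw [hr]
      exact hLprod _ (K.mul_mem (K.inv_mem (hK x hx _)) hg) (hxT g hg hgR)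
    calc prodRPow ((x, T) :: L.map fun p => (p.1, p.2.comp r)) g
        = rpow x (T g) * prodRPow L (r g) := by simp [prodRPow, Function.comp_def]
      _ = g := by rw [hrg, mul_inv_cancel_left]

theorem exists_prodRPow_eq (hK : ∀ x ∈ K, ∀ t, rpow x t ∈ K) :
    ∃ L : List (unitriangular n × C(Mat n ℝ, ℝ)), (∀ p ∈ L, p.1 ∈ K ∧ p.2 1 = 0) ∧
      ∀ g ∈ K, prodRPow L g = g := by
  simpa using exists_prodRPow_eq_of_isUpperSet hK Set.univ isUpperSet_univ

theorem isClosed_coe_image (hK : ∀ x ∈ K, ∀ t, rpow x t ∈ K) :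
    IsClosed ((↑) '' (K : Set (unitriangular n)) : Set (Mat n ℝ)) := by
  obtain ⟨L, hL, hLprod⟩ := exists_prodRPow_eq hK
  have himage : ((↑) '' (K : Set (unitriangular n)) : Set (Mat n ℝ)) =
      {A | (prodRPow L A : Mat n ℝ) = A} := by
    ext A
    refine ⟨?_, fun hA => ⟨prodRPow L A, ?_, hA⟩⟩
    · rintro ⟨g, hg, rfl⟩
      exact congrArg _ (hLprod g hg)
    · refine list_prod_mem fun y hy => ?_
      obtain ⟨p, hp, rfl⟩ := List.mem_map.1 hy
      exact hK _ (hL p hp).1 _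
  rw [himage]
  exact isClosed_eq (continuous_subtype_val.comp (continuous_prodRPow L)) continuous_id

end unitriangular

section NormalizedProduct

open unitriangular

/-- The pairs `(a, b)` with `a ∈ H` and `b ∈ aN`. They are closed under multiplication because `H`
normalizes `N`, so choosing representatives in `H` of cosets of `N` is compatible with products. -/
def cosetPairs {U : Type*} [Group U] {H N : Subgroup U} (hHN : H ≤ Subgroup.normalizer N) :
    Submonoid (U × U) where
  carrier := {p | p.1 ∈ H ∧ p.1⁻¹ * p.2 ∈ N}
  one_mem' := by simp [H.one_mem, N.one_mem]
  mul_mem' {p q} hp hq := by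
    refine ⟨H.mul_mem hp.1 hq.1, ?_⟩
    have hconj := (Subgroup.mem_normalizer_iff''.1 (hHN hq.1) _).1 hp.2
    simpa [mul_assoc] using N.mul_mem hconj hq.2

theorem mem_sup_iff_exists_mem_cosetPairs {U : Type*} [Group U] {H N : Subgroup U}
    (hHN : H ≤ Subgroup.normalizer N) {g : U} :
    g ∈ H ⊔ N ↔ ∃ h, (h, g) ∈ cosetPairs hHN := by
  rw [← SetLike.mem_coe, Subgroup.coe_mul_of_left_le_normalizer_right _ _ hHN]
  constructor
  · rintro ⟨h, hh, v, hv, rfl⟩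
    exact ⟨h, hh, by simpa using hv⟩
  · rintro ⟨h, hh, hv⟩
    exact ⟨h, hh, _, hv, mul_inv_cancel_left h g⟩

variable {n : ℕ} {H N : Set (Mat n ℝ)}

/-- A real unipotent group as a subgroup of `UT(n,ℝ)`. -/
def IsRealUnipotentGroup.toSubgroup (hH : IsRealUnipotentGroup n H) :
    Subgroup (unitriangular n) where
  carrier := {x | (x : Mat n ℝ) ∈ H}
  one_mem' := hH.2.1
  mul_mem' hx hy := hH.2.2.1 _ hx _ hy
  inv_mem' hx := hH.2.2.2 _ hx

theorem IsRealUnipotentGroup.mem_unitriangular (hH : IsRealUnipotentGroup n H) {A : Mat n ℝ}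
    (hA : A ∈ H) : A ∈ unitriangular n := by
  obtain ⟨⟨S, rfl⟩, -⟩ := hH
  exact hA.1

theorem IsNormalIn.toSubgroup_le_normalizer (hH : IsRealUnipotentGroup n H)
    (hN : IsRealUnipotentGroup n N) (hHN : IsNormalIn n H N) :
    hH.toSubgroup ≤ Subgroup.normalizer hN.toSubgroup :=
  Subgroup.le_normalizer_iff.2 fun h hh v hv => hHN h hh v hv

variable (hH : IsRealUnipotentGroup n H) (hN : IsRealUnipotentGroup n N)

theorem coe_image_sup_toSubgroup (hHN : IsNormalIn n H N) :
    ((↑) '' ((hH.toSubgroup ⊔ hN.toSubgroup : Subgroup _) : Set (unitriangular n)) :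
      Set (Mat n ℝ)) = H * N := by
  rw [Subgroup.coe_mul_of_left_le_normalizer_right _ _ (hHN.toSubgroup_le_normalizer hH hN)]
  ext A
  constructor
  · rintro ⟨_, ⟨h, hh, v, hv, rfl⟩, rfl⟩
    exact ⟨h, hh, v, hv, rfl⟩
  · rintro ⟨h, hh, v, hv, rfl⟩
    exact ⟨_, ⟨⟨h, hH.mem_unitriangular hh⟩, hh, ⟨v, hN.mem_unitriangular hv⟩, hv, rfl⟩, rfl⟩

variable {hH hN}

theorem rpow_mem_cosetPairs {hle : hH.toSubgroup ≤ Subgroup.normalizer hN.toSubgroup}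
    {h g : unitriangular n} (hhg : (h, g) ∈ cosetPairs hle) (t : ℝ) :
    (rpow h t, rpow g t) ∈ cosetPairs hle := by
  have hpow (k : ℕ) : (h ^ k, g ^ k) ∈ cosetPairs hle := pow_mem hhg k
  have hcurve (x : unitriangular n) : IsPolynomialCurve fun t => (rpow x t : Mat n ℝ) :=
    isPolynomialCurve_matRPow (x : Mat n ℝ)
  have hcurve' : IsPolynomialCurve fun t => ((rpow h t)⁻¹ * rpow g t : unitriangular n).1 := by
    simpa only [Submonoid.coe_mul, coe_inv_eq_adjugate] using (hcurve h).adjugate.mul (hcurve g)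
  refine ⟨(hcurve h).mem_of_natCast_mem hH (fun k => ?_) t,
    hcurve'.mem_of_natCast_mem hN (fun k => ?_) t⟩
  · rw [rpow_natCast]
    exact (hpow k).1
  · rw [rpow_natCast, rpow_natCast]
    exact (hpow k).2

theorem rpow_mem_sup_toSubgroup (hle : hH.toSubgroup ≤ Subgroup.normalizer hN.toSubgroup) :
    ∀ x ∈ hH.toSubgroup ⊔ hN.toSubgroup, ∀ t, rpow x t ∈ hH.toSubgroup ⊔ hN.toSubgroup := by
  intro x hx t
  obtain ⟨h, hh⟩ := (mem_sup_iff_exists_mem_cosetPairs hle).1 hx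
  exact (mem_sup_iff_exists_mem_cosetPairs hle).2 ⟨rpow h t, rpow_mem_cosetPairs hh t⟩

theorem isClosed_mul_of_isNormalIn (hH : IsRealUnipotentGroup n H) (hN : IsRealUnipotentGroup n N)
    (hHN : IsNormalIn n H N) : IsClosed (H * N) := by
  rw [← coe_image_sup_toSubgroup hH hN hHN]
  exact isClosed_coe_image (rpow_mem_sup_toSubgroup (hHN.toSubgroup_le_normalizer hH hN))

theorem prodRPow_mem_cosetPairs {hle : hH.toSubgroup ≤ Subgroup.normalizer hN.toSubgroup}
    {L : List (unitriangular n × C(Mat n ℝ, ℝ))} {s : unitriangular n → unitriangular n}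
    (hs : ∀ p ∈ L, (s p.1, p.1) ∈ cosetPairs hle) (A : Mat n ℝ) :
    (prodRPow (L.map fun p => (s p.1, p.2)) A, prodRPow L A) ∈ cosetPairs hle := by
  induction L with
  | nil => exact one_mem _
  | cons p L ih =>
    rw [List.forall_mem_cons] at hs
    exact mul_mem (rpow_mem_cosetPairs hs.1 (p.2 A)) (ih hs.2)

theorem exists_continuous_section (hH : IsRealUnipotentGroup n H) (hN : IsRealUnipotentGroup n N)
    (hHN : IsNormalIn n H N) :
    ∃ σ : Mat n ℝ → Mat n ℝ, Continuous σ ∧ σ 1 = 1 ∧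
      ∀ A ∈ H * N, σ A ∈ H ∧ A ∈ {σ A} * N := by
  have hle := hHN.toSubgroup_le_normalizer hH hN
  obtain ⟨L, hL, hLprod⟩ := exists_prodRPow_eq (rpow_mem_sup_toSubgroup hle)
  choose! s hs using fun x => (mem_sup_iff_exists_mem_cosetPairs hle (g := x)).1
  let L' : List (unitriangular n × C(Mat n ℝ, ℝ)) := L.map fun p => (s p.1, p.2)
  refine ⟨fun A => prodRPow L' A, continuous_subtype_val.comp (continuous_prodRPow _), ?_, ?_⟩
  · have hone : ∀ q ∈ L', q.2 1 = 0 :=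
      List.forall_mem_map.2 fun p hp => (hL p hp).2
    exact congrArg Subtype.val (prodRPow_one hone)
  · rw [← coe_image_sup_toSubgroup hH hN hHN]
    rintro _ ⟨g, hg, rfl⟩
    have hσ := prodRPow_mem_cosetPairs (fun p hp => hs p.1 (hL p hp).1) (g : Mat n ℝ)
    rw [hLprod g hg] at hσ
    exact ⟨hσ.1, _, rfl, _, hσ.2, congrArg Subtype.val (mul_inv_cancel_left _ g)⟩

end NormalizedProduct

section Cosets

variable {n : ℕ} {H N : Set (Mat n ℝ)} {A B : Mat n ℝ}

theorem IsRealUnipotentGroup.isUnit_det (hH : IsRealUnipotentGroup n H) (hA : A ∈ H) :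
    IsUnit A.det := by
  rw [det_of_mem_UTset (hH.mem_unitriangular hA)]
  exact isUnit_one

theorem IsRealUnipotentGroup.inv_mul_mem (hH : IsRealUnipotentGroup n H) (hA : A ∈ H)
    (hB : B ∈ H) : A⁻¹ * B ∈ H :=
  hH.2.2.1 _ (hH.2.2.2 _ hA) _ hB

theorem IsRealUnipotentGroup.mul_mem_iff (hH : IsRealUnipotentGroup n H) (hA : A ∈ H) :
    A * B ∈ H ↔ B ∈ H :=
  ⟨fun h => by simpa [Matrix.nonsing_inv_mul_cancel_left _ _ (hH.isUnit_det hA)]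
    using hH.inv_mul_mem hA h, hH.2.2.1 _ hA _⟩

theorem IsRealUnipotentGroup.singleton_mul_inter (hH : IsRealUnipotentGroup n H) (hA : A ∈ H)
    (S : Set (Mat n ℝ)) : ({A} * S) ∩ H = {A} * (S ∩ H) := by
  ext B
  simp only [Set.singleton_mul, Set.mem_inter_iff, Set.mem_image]
  constructor
  · rintro ⟨⟨v, hv, rfl⟩, hAv⟩
    exact ⟨v, ⟨hv, (hH.mul_mem_iff hA).1 hAv⟩, rfl⟩
  · rintro ⟨v, ⟨hv, hvH⟩, rfl⟩
    exact ⟨⟨v, hv, rfl⟩, (hH.mul_mem_iff hA).2 hvH⟩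

theorem IsRealUnipotentGroup.singleton_mul_self (hH : IsRealUnipotentGroup n H) (hA : A ∈ H) :
    {A} * H = H := by
  ext B
  rw [Set.singleton_mul, Set.mem_image]
  constructor
  · rintro ⟨v, hv, rfl⟩
    exact hH.2.2.1 _ hA _ hv
  · exact fun hB => ⟨_, hH.inv_mul_mem hA hB,
      Matrix.mul_nonsing_inv_cancel_left _ _ (hH.isUnit_det hA)⟩

theorem IsRealUnipotentGroup.singleton_mul_eq (hH : IsRealUnipotentGroup n H)
    (hA : A ∈ {B} * H) : {A} * H = {B} * H := by
  obtain ⟨_, rfl, w, hw, rfl⟩ := hA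
  rw [← Set.singleton_mul_singleton, mul_assoc, hH.singleton_mul_self hw]

theorem IsNormalIn.mem_singleton_mul (hH : IsRealUnipotentGroup n H)
    (hN : IsRealUnipotentGroup n N) (hHN : IsNormalIn n H N) {c D : Mat n ℝ} (hc : c ∈ H)
    (hA : A ∈ {B} * N) (hD : D ∈ {A} * ({c} * N)) : D ∈ {B * c} * N := by
  rw [Set.singleton_mul] at hA
  obtain ⟨u, hu, rfl⟩ := hA
  simp only [Set.singleton_mul, Set.image_image] at hD
  obtain ⟨v, hv, rfl⟩ := hD
  have hconj : c⁻¹ * u * c ∈ N := by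
    simpa [Matrix.nonsing_inv_nonsing_inv _ (hH.isUnit_det hc)] using
      hHN _ (hH.2.2.2 _ hc) _ hu
  refine ⟨_, rfl, _, hN.2.2.1 _ hconj _ hv, ?_⟩
  simp only [mul_assoc, Matrix.mul_nonsing_inv_cancel_left _ _ (hH.isUnit_det hc)]

theorem mem_mul_of_mul_mem (hH : IsRealUnipotentGroup n H) (hN : IsRealUnipotentGroup n N)
    (hHN : IsNormalIn n H N) (hB : B ∈ H * N) (hAB : A * B ∈ H * N) : A ∈ H * N := by
  rw [← coe_image_sup_toSubgroup hH hN hHN] at hB hAB ⊢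
  obtain ⟨y, hy, rfl⟩ := hB
  obtain ⟨x, hx, hxA⟩ := hAB
  refine ⟨x * y⁻¹, mul_mem hx (inv_mem hy), ?_⟩
  rw [Submonoid.coe_mul, hxA, mul_assoc, ← Submonoid.coe_mul, mul_inv_cancel, Submonoid.coe_one,
    mul_one]

end Cosets

section Nonstandard

variable {n : ℕ} {u v : ℕ → Mat n ℝ}

theorem matOfSeq_mul : matOfSeq n u * matOfSeq n v = matOfSeq n fun k => u k * v k := by
  ext i j
  have hsum := map_sum (Germ.coeRingHom (R := ℝ) (hyperfilter ℕ : Filter ℕ))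
    (fun l k => u k i l * v k l j) Finset.univ
  simp only [Matrix.mul_apply, matOfSeq, Matrix.of_apply]
  rw [Finset.sum_fn] at hsum
  exact hsum.symm

theorem matOfSeq_eq_iff :
    matOfSeq n u = matOfSeq n v ↔ ∀ᶠ k in hyperfilter ℕ, u k = v k := by
  have hentry (i j : Fin n) : matOfSeq n u i j = matOfSeq n v i j ↔
      ∀ᶠ k in hyperfilter ℕ, u k i j = v k i j := Germ.coe_eq
  simp only [← Matrix.ext_iff, hentry, eventually_all]

theorem matOfSeq_mem_matSharp_iff {S : Set (Mat n ℝ)} :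
    matOfSeq n u ∈ matSharp n S ↔ ∀ᶠ k in hyperfilter ℕ, u k ∈ S := by
  refine ⟨?_, fun hu => ⟨u, hu, rfl⟩⟩
  rintro ⟨v, hv, huv⟩
  filter_upwards [hv, matOfSeq_eq_iff.1 huv] with k hvk hk
  rwa [hk]

theorem matOfSeq_mem_muSet_iff {G : Set (Mat n ℝ)} :
    matOfSeq n u ∈ muSet n G ↔
      (∀ᶠ k in hyperfilter ℕ, u k ∈ G) ∧ Tendsto u (hyperfilter ℕ) (𝓝 1) := by
  have hentry (i j : Fin n) : matOfSeq n u i j - (1 : Mat n Hyperreal) i j =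
      Hyperreal.ofSeq fun k => u k i j - (1 : Mat n ℝ) i j := by
    rcases eq_or_ne i j with rfl | hij
    · simp only [Matrix.one_apply_eq]; rfl
    · simp only [Matrix.one_apply_ne hij]; rfl
  refine and_congr matOfSeq_mem_matSharp_iff ?_
  refine (forall₂_congr fun i j => ?_).trans
    (tendsto_pi_nhds.trans <| forall_congr' fun i => tendsto_pi_nhds).symm
  rw [hentry, ← tendsto_sub_nhds_zero_iff, (nhds_basis_Ioo_pos _).tendsto_right_iff]
  exact forall₂_congr fun _ _ =>
    (Hyperreal.ofSeq_lt_ofSeq.and Hyperreal.ofSeq_lt_ofSeq).trans eventually_and.symm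

theorem nearCoset_matOfSeq_iff {G M : Set (Mat n ℝ)} {c : Mat n ℝ} :
    NearCoset n G c M (matOfSeq n u) ↔ ∃ e : ℕ → Mat n ℝ, (∀ᶠ k in hyperfilter ℕ, e k ∈ G) ∧
      Tendsto e (hyperfilter ℕ) (𝓝 1) ∧ ∀ᶠ k in hyperfilter ℕ, u k ∈ {e k} * ({c} * M) := by
  have hprod (e v : ℕ → Mat n ℝ) : matOfSeq n e * (matCast c * matOfSeq n v) = matOfSeq n u ↔
      ∀ᶠ k in hyperfilter ℕ, e k * (c * v k) = u k := by
    rw [← matOfSeq_eq_iff, ← matOfSeq_mul, ← matOfSeq_mul]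
    rfl
  constructor
  · rintro ⟨_, hE, _, ⟨_, rfl, _, ⟨v, hv, rfl⟩, rfl⟩, heq⟩
    obtain ⟨e, -, rfl⟩ := hE.1
    obtain ⟨he, htendsto⟩ := matOfSeq_mem_muSet_iff.1 hE
    refine ⟨e, he, htendsto, ?_⟩
    filter_upwards [hv, (hprod e v).1 heq] with k hvk hk
    exact ⟨_, rfl, _, ⟨_, rfl, _, hvk, rfl⟩, hk⟩
  · rintro ⟨e, he, htendsto, hmem⟩
    have hex : ∀ᶠ k in hyperfilter ℕ, ∃ v ∈ M, e k * (c * v) = u k := by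
      filter_upwards [hmem] with k hk
      simpa [Set.singleton_mul] using hk
    obtain ⟨v, hv⟩ := hex.choice
    exact ⟨_, matOfSeq_mem_muSet_iff.2 ⟨he, htendsto⟩, _,
      ⟨_, rfl, _, ⟨v, hv.mono fun k hk => hk.1, rfl⟩, rfl⟩,
      (hprod e v).2 (hv.mono fun k hk => hk.2)⟩

end Nonstandard

section Main

variable {n : ℕ} {G H N : Set (Mat n ℝ)} {b c : Mat n ℝ} {α : Mat n Hyperreal}

theorem singleton_mul_inter_nonempty_of_nearCoset (hH : IsRealUnipotentGroup n H)
    (hN : IsRealUnipotentGroup n N) (hHN : IsNormalIn n H N) (hα : α ∈ matSharp n H)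
    (hnear : NearCoset n G b N α) : (({b} * N) ∩ H).Nonempty := by
  obtain ⟨h, hh, rfl⟩ := hα
  obtain ⟨e, -, he, hhe⟩ := nearCoset_matOfSeq_iff.1 hnear
  have heb : ∀ᶠ k in hyperfilter ℕ, e k * b ∈ H * N := by
    filter_upwards [hh, hhe] with k hk
    intro hek
    simp only [Set.singleton_mul, Set.image_image] at hek
    obtain ⟨v, hv, hev⟩ := hek
    refine mem_mul_of_mul_mem hH hN hHN ⟨1, hH.2.1, v, hv, one_mul v⟩
      ⟨h k, hk, 1, hN.2.1, ?_⟩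
    simpa [mul_assoc] using hev.symm
  have hlim : Tendsto (fun k => e k * b) (hyperfilter ℕ) (𝓝 b) := by
    simpa using he.mul_const b
  obtain ⟨w, hw, v, hv, rfl⟩ := (isClosed_mul_of_isNormalIn hH hN hHN).mem_of_tendsto hlim heb
  refine ⟨w, ⟨_, rfl, v⁻¹, hN.2.2.2 v hv, ?_⟩, hw⟩
  exact Matrix.mul_nonsing_inv_cancel_right _ _ (hN.isUnit_det hv)

theorem NearCoset.inter (hH : IsRealUnipotentGroup n H) (hN : IsRealUnipotentGroup n N)
    (hHG : H ⊆ G) (hHN : IsNormalIn n H N) (hα : α ∈ matSharp n H)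
    (hcb : c ∈ {b} * N) (hc : c ∈ H) (hnear : NearCoset n G b N α) : NearCoset n G c (N ∩ H) α := by
  obtain ⟨h, hh, rfl⟩ := hα
  obtain ⟨e, -, he, hhe⟩ := nearCoset_matOfSeq_iff.1 hnear
  rw [← hN.singleton_mul_eq hcb] at hhe
  obtain ⟨σ, hσcont, hσ_one, hσ⟩ := exists_continuous_section hH hN hHN
  have heHN : ∀ᶠ k in hyperfilter ℕ, e k ∈ H * N := by
    filter_upwards [hh, hhe] with k hk
    intro hek
    simp only [Set.singleton_mul, Set.image_image] at hek
    obtain ⟨v, hv, hev⟩ := hek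
    exact mem_mul_of_mul_mem hH hN hHN ⟨c, hc, v, hv, rfl⟩
      ⟨h k, hk, 1, hN.2.1, (mul_one _).trans hev.symm⟩
  refine nearCoset_matOfSeq_iff.2 ⟨fun k => σ (e k), ?_, ?_, ?_⟩
  · filter_upwards [heHN] with k hk using hHG (hσ _ hk).1
  · exact (hσcont.tendsto' 1 1 hσ_one).comp he
  · filter_upwards [hh, hhe, heHN] with k hk hek heHNk
    obtain ⟨hσH, hσN⟩ := hσ _ heHNk
    rw [← mul_assoc, Set.singleton_mul_singleton,
      ← hH.singleton_mul_inter (hH.2.2.1 _ hσH _ hc)]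
    exact ⟨hHN.mem_singleton_mul hH hN hc hσN hek, hk⟩

end Main

theorem stmt3_general {n : ℕ} {G H N : Set (Mat n ℝ)} (hH : IsRealUnipotentGroup n H)
    (hN : IsRealUnipotentGroup n N) (hHG : H ⊆ G) (hHN : IsNormalIn n H N)
    {α : Mat n Hyperreal} (hα : α ∈ matSharp n H) {b : Mat n ℝ} (hnear : NearCoset n G b N α) :
    (({b} * N) ∩ H).Nonempty ∧
    ∀ c ∈ ({b} * N) ∩ H,
      ({b} * N) ∩ H = {c} * (N ∩ H) ∧ NearCoset n G c (N ∩ H) α := by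
  refine ⟨singleton_mul_inter_nonempty_of_nearCoset hH hN hHN hα hnear, fun c ⟨hcb, hcH⟩ => ?_⟩
  rw [← hN.singleton_mul_eq hcb, hH.singleton_mul_inter hcH]
  exact ⟨rfl, hnear.inter hH hN hHG hHN hα hcb hcH⟩

/-- if `α ∈ H^♯` and `bN` is near `α` with `N` normal, then `bN ∩ H` is a
nonempty coset of `N ∩ H` near `α`. -/
theorem stmt3 {n : ℕ} (G : Set (Mat n ℝ)) (hG : IsRealUnipotentGroup n G)
    (H N : Set (Mat n ℝ)) (hH : IsRealAlgSubgroup n G H) (hN : IsRealAlgSubgroup n G N)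
    (hNnormal : IsNormalIn n G N)
    (α : Mat n Hyperreal) (hα : α ∈ matSharp n H)
    (b : Mat n ℝ) (hb : b ∈ G) (hnear : NearCoset n G b N α) :
    (({b} * N) ∩ H).Nonempty ∧
    ∀ c ∈ ({b} * N) ∩ H,
      ({b} * N) ∩ H = {c} * (N ∩ H) ∧ NearCoset n G c (N ∩ H) α :=
  stmt3_general hH.2 hN.2 hH.1 (fun g hg => hNnormal g (hH.1 hg)) hα hnear
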